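/- Consider an MLST instance with source s ∈ T_ℓ and the associated flow-based ILP. The minimum of the objective Σ_{uv∈E} c(uv)·(y_{uv} + y_{vu}) over all feasible ILP solutions equals OPT, the minimum cost of a feasible MLST solution of the instance. -/

import Mathlib

/-- The vertices covered by a set of edges. -/
def edgeSupport {V : Type*} (S : Set (Sym2 V)) : Set V :=
  {v | ∃ e ∈ S, v ∈ e}

/-- The edges of `S` form a connected subgraph containing all vertices of `T`:
all vertices of `T` together with all endpoints of edges of `S` are mutually
reachable using only edges of `S`. -/
def SpansConn {V : Type*} (S : Set (Sym2 V)) (T : Set V) : Prop :=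
  ∀ u ∈ T ∪ edgeSupport S, ∀ v ∈ T ∪ edgeSupport S,
    (SimpleGraph.fromEdgeSet S).Reachable u v

/-- `L(v)`: the largest level `i ∈ {1, …, ℓ}` with `v ∈ T i` (`0` if none). -/
def Lvl {V : Type*} [DecidableEq V] (ℓ : ℕ) (T : ℕ → Finset V) (v : V) : ℕ :=
  ((Finset.Icc 1 ℓ).filter (fun i => v ∈ T i)).sup id

/-- Feasibility of a solution `(x, y, f)` of the flow-based ILP for the MLST problem:
variables live on arcs (ordered adjacent pairs) of `G`; flow conservation routes
`|T₁| − 1` units from the source `s` to the bottom-level terminals; capacity,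
in-degree, linking, propagation and terminal-level constraints as in the paper. -/
def ILPFeasible {V : Type*} [Fintype V] [DecidableEq V] (G : SimpleGraph V)
    (ℓ : ℕ) (T : ℕ → Finset V) (s : V)
    (x y : V → V → ℕ) (f : V → V → ℝ) : Prop :=
  (∀ u v : V, ¬ G.Adj u v → x u v = 0) ∧
  (∀ u v : V, ¬ G.Adj u v → y u v = 0) ∧
  (∀ u v : V, ¬ G.Adj u v → f u v = 0) ∧
  (∀ u v : V, x u v ≤ 1) ∧
  (∀ u v : V, x u v ≤ y u v ∧ y u v ≤ ℓ * x u v) ∧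
  (∀ u v : V, 0 ≤ f u v ∧ f u v ≤ (((T 1).card : ℝ) - 1) * (x u v : ℝ)) ∧
  (∀ v : V, (∑ w : V, f v w) - (∑ u : V, f u v) =
      if v = s then ((T 1).card : ℝ) - 1 else if v ∈ T 1 then -1 else 0) ∧
  (∀ v : V, ∑ u : V, x u v ≤ 1) ∧
  (∀ v w : V, G.Adj v w → v ≠ s → x v w ≤ ∑ u ∈ Finset.univ.erase w, x u v) ∧
  (∀ v w : V, G.Adj v w → v ≠ s → y v w ≤ ∑ u ∈ Finset.univ.erase w, y u v) ∧
  (∀ v ∈ T 1, v ≠ s → Lvl ℓ T v ≤ ∑ u : V, y u v)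

/-- The ILP objective `Σ_{uv ∈ E} c(uv)·(y_{uv} + y_{vu})`, written as a sum over
ordered pairs (the cost function `c` is symmetric and `y` vanishes off arcs). -/
def ILPobj {V : Type*} [Fintype V] (c : V → V → ℝ) (y : V → V → ℕ) : ℝ :=
  ∑ u : V, ∑ v : V, c u v * (y u v : ℝ)

/-- The undirected edge set on level `i` extracted from the ILP variables `y`:
edges `uv` of `G` with `y u v ≥ i` or `y v u ≥ i`. -/
def EdgeLvl {V : Type*} (G : SimpleGraph V) (y : V → V → ℕ) (i : ℕ) : Set (Sym2 V) :=
  {e | e ∈ G.edgeSet ∧ ∃ u v : V, e = s(u, v) ∧ i ≤ y u v}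

/-- A feasible MLST solution: nested edge sets `Esol ℓ ⊆ … ⊆ Esol 1 ⊆ E` with
`Esol i` spanning `T i` for each level `1 ≤ i ≤ ℓ`. -/
def MLSTFeasible {V : Type*} (G : SimpleGraph V) (ℓ : ℕ) (T : ℕ → Set V)
    (Esol : ℕ → Finset (Sym2 V)) : Prop :=
  (∀ i ∈ Finset.Icc 1 ℓ, ↑(Esol i) ⊆ G.edgeSet ∧ SpansConn (↑(Esol i)) (T i)) ∧
  (∀ i ∈ Finset.Icc 1 ℓ, ∀ j ∈ Finset.Icc 1 ℓ, i ≤ j → Esol j ⊆ Esol i)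

/-- The set of costs of feasible MLST solutions. Its least element is `OPT`. -/
def MLSTCosts {V : Type*} (G : SimpleGraph V) (c : Sym2 V → ℝ) (ℓ : ℕ)
    (T : ℕ → Set V) : Set ℝ :=
  {v | ∃ Esol : ℕ → Finset (Sym2 V), MLSTFeasible G ℓ T Esol ∧
    v = ∑ i ∈ Finset.Icc 1 ℓ, ∑ e ∈ Esol i, c e}

section Helpers

open Classical in
/-- From an ILP-feasible solution, build an MLST solution of no larger cost. -/
lemma ilp_to_mlst {V : Type} [Fintype V] [DecidableEq V] (G : SimpleGraph V)
    (c : V → V → ℝ) (hcsymm : ∀ u v : V, c u v = c v u)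
    (hcpos : ∀ u v : V, G.Adj u v → 0 < c u v)
    (ℓ : ℕ) (T : ℕ → Finset V)
    (hnest : ∀ i ∈ Finset.Icc 1 ℓ, ∀ j ∈ Finset.Icc 1 ℓ, i ≤ j → T j ⊆ T i)
    (s : V) (x y : V → V → ℕ) (f : V → V → ℝ)
    (h : ILPFeasible G ℓ T s x y f) :
    ∃ r ∈ MLSTCosts G (Sym2.lift ⟨c, hcsymm⟩) ℓ (fun i => (↑(T i) : Set V)), r ≤ ILPobj c y := by
  obtain ⟨hx0, hy0, hf0, hx1, hlink, hcap, hflow, hin, hxp, hyp, hterm⟩ := h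
  let R : V → Prop := fun v => Relation.ReflTransGen (fun u v => 0 < x u v) s v
  have hRs : R s := Relation.ReflTransGen.refl
  -- every bottom-level terminal is reached
  have hcut : ∀ t ∈ T 1, R t := by
    intro t ht
    by_contra hRt
    let N : Finset V := Finset.univ.filter (fun v => ¬ R v)
    have hz : ∀ u v, R u → ¬ R v → f u v = 0 := by
      intro u v hu hv
      have hx : x u v = 0 := by
        by_contra hne
        exact hv (Relation.ReflTransGen.tail hu (Nat.pos_of_ne_zero hne))
      have := hcap u v
      rw [hx] at this
      simp at this
      linarith [this.1, this.2]
    have h1 : ∑ v ∈ N, ∑ u : V, f u v = ∑ v ∈ N, ∑ u ∈ N, f u v := by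
      refine Finset.sum_congr rfl fun v hv => ?_
      symm
      refine Finset.sum_subset (Finset.subset_univ _) fun u _ hu => ?_
      simp only [N, Finset.mem_filter, Finset.mem_univ, true_and, not_not] at hu hv
      exact hz u v hu hv
    have h2 : ∑ v ∈ N, ∑ u ∈ N, f u v ≤ ∑ u ∈ N, ∑ v : V, f u v := by
      rw [Finset.sum_comm]
      refine Finset.sum_le_sum fun u _ => ?_
      exact Finset.sum_le_sum_of_subset_of_nonneg (Finset.subset_univ _)
        fun v _ _ => (hcap u v).1
    have h3 : ∑ v ∈ N, ((∑ w : V, f v w) - (∑ u : V, f u v)) < 0 := by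
      refine Finset.sum_neg' (fun v hv => ?_) ⟨t, ?_, ?_⟩
      · rw [hflow v]
        have : v ≠ s := by
          rintro rfl
          simp [N, hRs] at hv
        simp only [this, if_false]
        split_ifs <;> norm_num
      · simp [N, hRt]
      · rw [hflow t]
        have : t ≠ s := by
          rintro rfl
          exact hRt hRs
        simp [this, ht]
    rw [Finset.sum_sub_distrib] at h3
    linarith
  -- the unique in-arc carries all of the level
  have hsum : ∀ p v, 0 < x p v → ∑ u : V, y u v = y p v := by
    intro p v hpv
    refine Finset.sum_eq_single p (fun u _ hu => ?_) (by simp)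
    have h1 : x u v + x p v ≤ ∑ u : V, x u v := by
      rw [← Finset.sum_pair (f := fun u => x u v) hu]
      exact Finset.sum_le_sum_of_subset (Finset.subset_univ _)
    have h2 := hin v
    have h3 : x u v = 0 := by omega
    have := (hlink u v).2
    rw [h3] at this
    simpa using this
  let P : ℕ → Finset (V × V) := fun i =>
    Finset.univ.filter (fun q => R q.1 ∧ i ≤ y q.1 q.2)
  let E : ℕ → Finset (Sym2 V) := fun i => (P i).image (fun q => s(q.1, q.2))
  have hmemE : ∀ i u v, R u → i ≤ y u v → s(u, v) ∈ E i := by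
    intro i u v hu hi
    refine Finset.mem_image.2 ⟨(u, v), ?_, rfl⟩
    simp [P, hu, hi]
  have hadj : ∀ i, 1 ≤ i → ∀ u v, i ≤ y u v → G.Adj u v := by
    intro i hi u v huv
    by_contra hn
    have := hy0 u v hn
    omega
  have hstep : ∀ i, 1 ≤ i → ∀ u v, R u → i ≤ y u v →
      (SimpleGraph.fromEdgeSet (↑(E i) : Set (Sym2 V))).Adj u v := by
    intro i hi u v hu hv
    rw [SimpleGraph.fromEdgeSet_adj]
    exact ⟨hmemE i u v hu hv, (hadj i hi u v hv).ne⟩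
  have hreach : ∀ i, 1 ≤ i → ∀ u, R u → ∀ v, i ≤ y u v →
      (SimpleGraph.fromEdgeSet (↑(E i) : Set (Sym2 V))).Reachable s u := by
    intro i hi u hu
    induction hu with
    | refl => intro v _; exact SimpleGraph.Reachable.refl _
    | @tail p u hp hpu ih =>
      intro v hv
      by_cases hus : u = s
      · rw [hus]
      have h1 := hyp u v (hadj i hi u v hv) hus
      have h2 : ∑ w ∈ Finset.univ.erase v, y w u ≤ ∑ w : V, y w u :=
        Finset.sum_le_sum_of_subset (Finset.subset_univ _)
      rw [hsum p u hpu] at h2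
      have h3 : i ≤ y p u := by omega
      exact (ih u h3).trans (hstep i hi p u hp h3).reachable
  have hall : ∀ i ∈ Finset.Icc 1 ℓ, ∀ v ∈ (↑(T i) : Set V) ∪ edgeSupport (↑(E i) : Set (Sym2 V)),
      (SimpleGraph.fromEdgeSet (↑(E i) : Set (Sym2 V))).Reachable s v := by
    intro i hi v hv
    have hi1 := (Finset.mem_Icc.1 hi).1
    rcases hv with hv | ⟨e, he, hve⟩
    · have hv' : v ∈ T i := hv
      by_cases hvs : v = s
      · rw [hvs]
      have hv1 : v ∈ T 1 := hnest 1 (by simp at hi ⊢; omega) i hi hi1 hv'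
      have hL : i ≤ Lvl ℓ T v :=
        Finset.le_sup (f := id) (Finset.mem_filter.2 ⟨hi, hv'⟩)
      have h1 := hterm v hv1 hvs
      rcases Relation.ReflTransGen.cases_tail (hcut v hv1) with h | ⟨p, hp, hpv⟩
      · exact absurd h hvs
      · rw [hsum p v hpv] at h1
        have h3 : i ≤ y p v := by omega
        exact (hreach i hi1 p hp v h3).trans (hstep i hi1 p v hp h3).reachable
    · obtain ⟨⟨a, b⟩, hab, rfl⟩ := Finset.mem_image.1 (Finset.mem_coe.1 he)
      simp only [P, Finset.mem_filter, Finset.mem_univ, true_and] at hab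
      have ha := hreach i hi1 a hab.1 b hab.2
      rcases Sym2.mem_iff.1 hve with rfl | rfl
      · exact ha
      · exact ha.trans (hstep i hi1 _ _ hab.1 hab.2).reachable
  refine ⟨_, ⟨E, ⟨?_, ?_⟩, rfl⟩, ?_⟩
  · intro i hi
    have hi1 := (Finset.mem_Icc.1 hi).1
    refine ⟨?_, fun u hu v hv => (hall i hi u hu).symm.trans (hall i hi v hv)⟩
    intro e he
    obtain ⟨⟨a, b⟩, hab, rfl⟩ := Finset.mem_image.1 (Finset.mem_coe.1 he)
    simp only [P, Finset.mem_filter, Finset.mem_univ, true_and] at hab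
    exact hadj i hi1 a b hab.2
  · intro i _ j _ hij
    refine Finset.image_subset_image fun q hq => ?_
    simp only [P, Finset.mem_filter, Finset.mem_univ, true_and] at hq ⊢
    exact ⟨hq.1, hij.trans hq.2⟩
  · have hle : ∀ i ∈ Finset.Icc 1 ℓ, ∑ e ∈ E i, Sym2.lift ⟨c, hcsymm⟩ e ≤
        ∑ q : V × V, if i ≤ y q.1 q.2 then c q.1 q.2 else 0 := by
      intro i hi
      have hi1 := (Finset.mem_Icc.1 hi).1
      have hpos : ∀ q : V × V, 0 ≤ if i ≤ y q.1 q.2 then c q.1 q.2 else 0 := by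
        intro q
        split_ifs with hq
        · exact (hcpos _ _ (hadj i hi1 _ _ hq)).le
        · exact le_rfl
      have h1 : ∑ e ∈ E i, Sym2.lift ⟨c, hcsymm⟩ e ≤ ∑ q ∈ P i, c q.1 q.2 := by
        refine Finset.sum_image_le_of_nonneg (g := fun q : V × V => s(q.1, q.2))
          (f := Sym2.lift ⟨c, hcsymm⟩) ?_
        intro e he
        obtain ⟨⟨a, b⟩, hab, rfl⟩ := Finset.mem_image.1 he
        simp only [P, Finset.mem_filter, Finset.mem_univ, true_and] at hab
        exact (hcpos _ _ (hadj i hi1 _ _ hab.2)).le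
      have h2 : ∑ q ∈ P i, c q.1 q.2 = ∑ q ∈ P i, if i ≤ y q.1 q.2 then c q.1 q.2 else 0 := by
        refine Finset.sum_congr rfl fun q hq => ?_
        simp only [P, Finset.mem_filter, Finset.mem_univ, true_and] at hq
        rw [if_pos hq.2]
      rw [h2] at h1
      exact h1.trans (Finset.sum_le_sum_of_subset_of_nonneg (Finset.subset_univ _)
        fun q _ _ => hpos q)
    refine (Finset.sum_le_sum hle).trans ?_
    rw [Finset.sum_comm, ILPobj, ← Fintype.sum_prod_type' (f := fun u v => c u v * (y u v : ℝ))]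
    refine Finset.sum_le_sum fun q _ => le_of_eq ?_
    rw [← Finset.sum_filter, Finset.sum_const, nsmul_eq_mul, mul_comm]
    have : (Finset.Icc 1 ℓ).filter (fun i => i ≤ y q.1 q.2) = Finset.Icc 1 (y q.1 q.2) := by
      ext i
      simp only [Finset.mem_filter, Finset.mem_Icc]
      have h1 := (hlink q.1 q.2).2
      have h2 := Nat.mul_le_mul_left ℓ (hx1 q.1 q.2)
      omega
    rw [this]
    simp

/-- A ranked parent function yields a unit flow from the root to every vertex. -/
lemma unit_flow {V : Type} [Fintype V] [DecidableEq V] (s : V) (p : V → V) (lv : V → ℕ)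
    (rk : V → ℕ ×ₗ ℕ)
    (hp : ∀ v, v ≠ s → 1 ≤ lv v → lv v ≤ lv (p v) ∧ rk (p v) < rk v) :
    ∀ (t : V), 1 ≤ lv t → ∃ g : V → V → ℝ, (∀ u v, 0 ≤ g u v) ∧
      (∀ u v, g u v ≤ if u = p v ∧ v ≠ s ∧ 1 ≤ lv v then 1 else 0) ∧
      (∀ u v, g u v ≠ 0 → rk v ≤ rk t) ∧
      (∀ v, (∑ w, g v w) - (∑ u, g u v) = (if v = s then 1 else 0) - (if v = t then 1 else 0)) := by
  have key : ∀ (a : ℕ ×ₗ ℕ) (t : V), rk t = a → 1 ≤ lv t → ∃ g : V → V → ℝ, (∀ u v, 0 ≤ g u v) ∧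
      (∀ u v, g u v ≤ if u = p v ∧ v ≠ s ∧ 1 ≤ lv v then 1 else 0) ∧
      (∀ u v, g u v ≠ 0 → rk v ≤ rk t) ∧
      (∀ v, (∑ w, g v w) - (∑ u, g u v) =
        (if v = s then 1 else 0) - (if v = t then 1 else 0)) := by
    intro a
    induction a using WellFoundedLT.induction with
    | ind a ih =>
    intro t hta ht
    by_cases hts : t = s
    · refine ⟨fun _ _ => 0, fun _ _ => le_rfl, fun u v => ?_, fun u v h => absurd rfl h, ?_⟩
      · split_ifs <;> norm_num
      · intro v
        simp [hts]
    · obtain ⟨h1, h2⟩ := hp t hts ht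
      obtain ⟨g, g0, g1, gr, gn⟩ := ih _ (hta ▸ h2) (p t) rfl (ht.trans h1)
      refine ⟨fun u v => g u v + if u = p t ∧ v = t then 1 else 0, ?_, ?_, ?_, ?_⟩
      · intro u v
        have := g0 u v
        dsimp only
        split_ifs <;> linarith
      · intro u v
        by_cases huv : u = p t ∧ v = t
        · obtain ⟨rfl, rfl⟩ := huv
          have : g (p v) v = 0 := by
            by_contra hne
            exact absurd (gr _ _ hne) (not_le.2 h2)
          simp [this, hts, ht]
        · simpa only [huv, if_false, add_zero] using g1 u v
      · intro u v hne
        by_cases huv : u = p t ∧ v = t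
        · rw [huv.2]
        · simp only [huv, if_false, add_zero] at hne
          exact (gr u v hne).trans h2.le
      · intro v
        have e1 : ∑ w, (if v = p t ∧ w = t then (1 : ℝ) else 0) = if v = p t then 1 else 0 := by
          by_cases hv : v = p t <;> simp [hv]
        have e2 : ∑ u, (if u = p t ∧ v = t then (1 : ℝ) else 0) = if v = t then 1 else 0 := by
          by_cases hv : v = t <;> simp [hv]
        rw [Finset.sum_add_distrib, Finset.sum_add_distrib, e1, e2]
        linarith [gn v]
  exact fun t => key _ t rfl

/-- A levelled arborescence gives a feasible ILP solution. -/
lemma tree_ilp {V : Type} [Fintype V] [DecidableEq V] (G : SimpleGraph V)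
    (ℓ : ℕ) (T : ℕ → Finset V) (s : V) (hs : s ∈ T 1) (p : V → V) (lv : V → ℕ)
    (rk : V → ℕ ×ₗ ℕ)
    (hp : ∀ v, v ≠ s → 1 ≤ lv v → G.Adj (p v) v ∧ lv v ≤ lv (p v) ∧ rk (p v) < rk v)
    (hlv : ∀ v, lv v ≤ ℓ) (hT1 : ∀ v ∈ T 1, 1 ≤ lv v)
    (hL : ∀ v ∈ T 1, Lvl ℓ T v ≤ lv v) :
    ∃ f, ILPFeasible G ℓ T s (fun u v => if u = p v ∧ v ≠ s ∧ 1 ≤ lv v then 1 else 0)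
      (fun u v => if u = p v ∧ v ≠ s ∧ 1 ≤ lv v then lv v else 0) f := by
  have hfl := unit_flow s p lv rk (fun v h1 h2 => (hp v h1 h2).2)
  choose! g g0 g1 gr gn using hfl
  have hmem : ∀ t ∈ (T 1).erase s, 1 ≤ lv t := fun t ht => hT1 t (Finset.mem_of_mem_erase ht)
  have hcard : (((T 1).erase s).card : ℝ) = ((T 1).card : ℝ) - 1 := by
    rw [Finset.card_erase_of_mem hs, Nat.cast_sub (Finset.card_pos.2 ⟨s, hs⟩)]
    simp
  have hupper : ∀ u v, ∑ t ∈ (T 1).erase s, g t u v ≤ (((T 1).card : ℝ) - 1) *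
      ((if u = p v ∧ v ≠ s ∧ 1 ≤ lv v then 1 else 0 : ℕ) : ℝ) := by
    intro u v
    rw [← hcard, ← nsmul_eq_mul]
    refine Finset.sum_le_card_nsmul _ _ _ fun t ht => ?_
    have := g1 t (hmem t ht) u v
    push_cast
    exact this
  have hnn : ∀ u v, 0 ≤ ∑ t ∈ (T 1).erase s, g t u v :=
    fun u v => Finset.sum_nonneg fun t ht => g0 t (hmem t ht) u v
  have hna : ∀ u v, ¬ G.Adj u v → ¬ (u = p v ∧ v ≠ s ∧ 1 ≤ lv v) := by
    rintro u v h ⟨rfl, h1, h2⟩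
    exact h (hp v h1 h2).1
  refine ⟨fun u v => ∑ t ∈ (T 1).erase s, g t u v, ?_, ?_, ?_, ?_, ?_, ?_, ?_, ?_, ?_, ?_, ?_⟩
  · intro u v h
    exact if_neg (hna u v h)
  · intro u v h
    exact if_neg (hna u v h)
  · intro u v h
    have h1 := hupper u v
    rw [if_neg (hna u v h)] at h1
    simp only [Nat.cast_zero, mul_zero] at h1
    exact le_antisymm h1 (hnn u v)
  · intro u v
    dsimp only
    split_ifs <;> simp
  · intro u v
    have := hlv v
    dsimp only
    split_ifs with h
    · omega
    · simp
  · exact fun u v => ⟨hnn u v, hupper u v⟩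
  · intro v
    dsimp only
    rw [Finset.sum_comm, Finset.sum_comm (s := Finset.univ), ← Finset.sum_sub_distrib]
    rw [Finset.sum_congr rfl fun t ht => gn t (hmem t ht) v, Finset.sum_sub_distrib]
    rw [Finset.sum_const, nsmul_eq_mul, hcard, Finset.sum_ite_eq]
    by_cases hv : v = s
    · simp [hv]
    · by_cases hv1 : v ∈ T 1 <;> simp [hv, hv1]
  · intro v
    by_cases h : v ≠ s ∧ 1 ≤ lv v <;> simp [h]
  · intro v w _ hvs
    dsimp only
    split_ifs with h
    · obtain ⟨rfl, h1, h2⟩ := h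
      obtain ⟨-, h3, h4⟩ := hp w h1 h2
      obtain ⟨-, h5, h6⟩ := hp (p w) hvs (h2.trans h3)
      have hne : p (p w) ≠ w := by
        intro he
        rw [he] at h6
        exact lt_asymm h4 h6
      have := Finset.single_le_sum (s := Finset.univ.erase w)
        (f := fun u => if u = p (p w) ∧ p w ≠ s ∧ 1 ≤ lv (p w) then 1 else 0)
        (fun _ _ => Nat.zero_le _) (Finset.mem_erase.2 ⟨hne, Finset.mem_univ _⟩)
      refine le_trans ?_ this
      simp [hvs, h2.trans h3]
    · exact Nat.zero_le _
  · intro v w _ hvs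
    dsimp only
    split_ifs with h
    · obtain ⟨rfl, h1, h2⟩ := h
      obtain ⟨-, h3, h4⟩ := hp w h1 h2
      obtain ⟨-, h5, h6⟩ := hp (p w) hvs (h2.trans h3)
      have hne : p (p w) ≠ w := by
        intro he
        rw [he] at h6
        exact lt_asymm h4 h6
      have := Finset.single_le_sum (s := Finset.univ.erase w)
        (f := fun u => if u = p (p w) ∧ p w ≠ s ∧ 1 ≤ lv (p w) then lv (p w) else 0)
        (fun _ _ => Nat.zero_le _) (Finset.mem_erase.2 ⟨hne, Finset.mem_univ _⟩)
      refine le_trans ?_ this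
      simp [hvs, h2.trans h3, h3]
    · exact Nat.zero_le _
  · intro v hv hvs
    have h1 := hT1 v hv
    have := hL v hv
    simpa [hvs, h1] using this

lemma exists_closer {V : Type} (H : SimpleGraph V) (s v : V) (h : H.Reachable s v)
    (hne : v ≠ s) : ∃ q, H.Adj q v ∧ H.Reachable s q ∧ H.dist s q < H.dist s v := by
  obtain ⟨w, hw⟩ := h.symm.exists_walk_length_eq_dist
  cases w with
  | nil => exact absurd rfl hne
  | @cons _ q _ hadj r =>
    refine ⟨q, hadj.symm, r.reachable.symm, ?_⟩
    have := SimpleGraph.dist_le r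
    rw [SimpleGraph.Walk.length_cons] at hw
    rw [SimpleGraph.dist_comm, SimpleGraph.dist_comm (u := s)]
    omega

open Classical in
/-- From an MLST solution, build an ILP-feasible solution of no larger cost. -/
lemma mlst_to_ilp {V : Type} [Fintype V] [DecidableEq V] (G : SimpleGraph V)
    (c : V → V → ℝ) (hcsymm : ∀ u v : V, c u v = c v u)
    (hcpos : ∀ u v : V, G.Adj u v → 0 < c u v)
    (ℓ : ℕ) (hℓ : 1 ≤ ℓ) (T : ℕ → Finset V)
    (hnest : ∀ i ∈ Finset.Icc 1 ℓ, ∀ j ∈ Finset.Icc 1 ℓ, i ≤ j → T j ⊆ T i)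
    (s : V) (hs : s ∈ T ℓ) (r : ℝ)
    (hr : r ∈ MLSTCosts G (Sym2.lift ⟨c, hcsymm⟩) ℓ (fun i => (↑(T i) : Set V))) :
    ∃ (x y : V → V → ℕ) (f : V → V → ℝ), ILPFeasible G ℓ T s x y f ∧ ILPobj c y ≤ r := by
  obtain ⟨E, ⟨hE, hEn⟩, rfl⟩ := hr
  let H : ℕ → SimpleGraph V := fun i => SimpleGraph.fromEdgeSet (↑(E i) : Set (Sym2 V))
  let lv : V → ℕ := fun v => Nat.findGreatest (fun i => (H i).Reachable s v) ℓ
  let rk : V → ℕ ×ₗ ℕ := fun v => toLex (ℓ - lv v, (H (lv v)).dist s v)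
  have hlv : ∀ v, lv v ≤ ℓ := fun v => Nat.findGreatest_le _
  have hlvr : ∀ v, 1 ≤ lv v → (H (lv v)).Reachable s v := by
    intro v hv
    exact Nat.findGreatest_of_ne_zero (P := fun i => (H i).Reachable s v) rfl
      (Nat.one_le_iff_ne_zero.1 hv)
  have hle : ∀ i v, i ≤ ℓ → (H i).Reachable s v → i ≤ lv v := fun i v hi h =>
    Nat.le_findGreatest (P := fun i => (H i).Reachable s v) hi h
  have hex : ∀ v, v ≠ s ∧ 1 ≤ lv v → ∃ q, s(q, v) ∈ E (lv v) ∧ lv v ≤ lv q ∧ rk q < rk v := by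
    rintro v ⟨hvs, hv⟩
    obtain ⟨q, hq1, hq2, hq3⟩ := exists_closer (H (lv v)) s v (hlvr v hv) hvs
    have hl := hle (lv v) q (hlv v) hq2
    refine ⟨q, ?_, hl, ?_⟩
    · exact ((SimpleGraph.fromEdgeSet_adj _).1 hq1).1
    · rw [Prod.Lex.toLex_lt_toLex]
      rcases hl.lt_or_eq with h | h
      · left
        have := hlv q
        dsimp only
        omega
      · right
        dsimp only
        rw [← h]
        exact ⟨rfl, hq3⟩
  choose! p hpE hpl hpr using hex
  have hIcc : ∀ v, 1 ≤ lv v → lv v ∈ Finset.Icc 1 ℓ := fun v hv => Finset.mem_Icc.2 ⟨hv, hlv v⟩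
  have hℓI : ℓ ∈ Finset.Icc 1 ℓ := Finset.mem_Icc.2 ⟨hℓ, le_rfl⟩
  have h1I : 1 ∈ Finset.Icc 1 ℓ := Finset.mem_Icc.2 ⟨le_rfl, hℓ⟩
  have hpadj : ∀ v, v ≠ s → 1 ≤ lv v → G.Adj (p v) v := fun v h1 h2 =>
    (hE _ (hIcc v h2)).1 (hpE v ⟨h1, h2⟩)
  have hTr : ∀ i ∈ Finset.Icc 1 ℓ, ∀ v ∈ T i, i ≤ lv v := by
    intro i hi v hv
    have hsi : s ∈ T i := hnest i hi ℓ hℓI (Finset.mem_Icc.1 hi).2 hs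
    exact hle i v (Finset.mem_Icc.1 hi).2 ((hE i hi).2 s (Or.inl hsi) v (Or.inl hv))
  obtain ⟨f, hf⟩ := tree_ilp G ℓ T s (hnest 1 h1I ℓ hℓI hℓ hs) p lv rk
    (fun v h1 h2 => ⟨hpadj v h1 h2, hpl v ⟨h1, h2⟩, hpr v ⟨h1, h2⟩⟩) hlv
    (fun v hv => hTr 1 h1I v hv) (by
      intro v hv
      refine Finset.sup_le fun i hi => ?_
      obtain ⟨hi1, hi2⟩ := Finset.mem_filter.1 hi
      exact hTr i hi1 v hi2)
  refine ⟨_, _, f, hf, ?_⟩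
  have hobj : ILPobj c (fun u v => if u = p v ∧ v ≠ s ∧ 1 ≤ lv v then lv v else 0) =
      ∑ i ∈ Finset.Icc 1 ℓ, ∑ v ∈ Finset.univ.filter (fun v => v ≠ s ∧ i ≤ lv v), c (p v) v := by
    simp_rw [Finset.sum_filter]
    rw [ILPobj, Finset.sum_comm, Finset.sum_comm (s := Finset.Icc 1 ℓ)]
    refine Finset.sum_congr rfl fun v _ => ?_
    rw [Finset.sum_eq_single (p v)]
    · by_cases hvs : v = s
      · simp [hvs]
      · have hfil : (Finset.Icc 1 ℓ).filter (fun i => i ≤ lv v) = Finset.Icc 1 (lv v) := by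
          ext i
          have := hlv v
          simp only [Finset.mem_filter, Finset.mem_Icc]
          omega
        simp only [ne_eq, hvs, not_false_eq_true, true_and]
        rw [← Finset.sum_filter, hfil, Finset.sum_const, nsmul_eq_mul, mul_comm]
        by_cases h1 : 1 ≤ lv v
        · simp [h1]
        · have : lv v = 0 := by omega
          simp [this]
    · intro u _ hu
      simp [hu]
    · simp
  rw [hobj]
  refine Finset.sum_le_sum fun i hi => ?_
  have hi1 := (Finset.mem_Icc.1 hi).1
  have hinj : Set.InjOn (fun v => s(p v, v))
      (↑(Finset.univ.filter (fun v => v ≠ s ∧ i ≤ lv v)) : Set V) := by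
    intro v hv w hw hvw
    simp only [Finset.coe_filter, Finset.mem_univ, true_and, Set.mem_setOf_eq] at hv hw
    rcases Sym2.eq_iff.1 hvw with h | h
    · exact h.2
    · have h1 := hpr v ⟨hv.1, hi1.trans hv.2⟩
      have h2 := hpr w ⟨hw.1, hi1.trans hw.2⟩
      rw [h.1] at h1
      rw [← h.2] at h2
      exact absurd h1 (lt_asymm h2)
  have hsi : ∑ v ∈ Finset.univ.filter (fun v => v ≠ s ∧ i ≤ lv v), c (p v) v =
      ∑ e ∈ (Finset.univ.filter (fun v => v ≠ s ∧ i ≤ lv v)).image (fun v => s(p v, v)),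
        Sym2.lift ⟨c, hcsymm⟩ e := by
    rw [Finset.sum_image hinj]
    rfl
  rw [hsi]
  refine Finset.sum_le_sum_of_subset_of_nonneg ?_ ?_
  · intro e he
    obtain ⟨v, hv, rfl⟩ := Finset.mem_image.1 he
    simp only [Finset.mem_filter, Finset.mem_univ, true_and] at hv
    have h1 := hi1.trans hv.2
    exact hEn i hi (lv v) (hIcc v h1) hv.2 (hpE v ⟨hv.1, h1⟩)
  · intro e he _
    have hG := (hE i hi).1 he
    induction e using Sym2.ind with
    | _ a b => exact (hcpos a b hG).le

end Helpers

/-- The minimum of the objective `Σ_{uv∈E} c(uv)·(y_{uv} + y_{vu})` over all feasible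
solutions of the flow-based ILP equals `OPT`, the minimum cost of a feasible MLST
solution of the instance. -/
theorem stmt_19 {V : Type} [Fintype V] [DecidableEq V] (G : SimpleGraph V)
    (hconn : G.Connected)
    (c : V → V → ℝ) (hcsymm : ∀ u v : V, c u v = c v u)
    (hcpos : ∀ u v : V, G.Adj u v → 0 < c u v)
    (ℓ : ℕ) (hℓ : 1 ≤ ℓ) (T : ℕ → Finset V)
    (hTne : ∀ i ∈ Finset.Icc 1 ℓ, (T i).Nonempty)
    (hnest : ∀ i ∈ Finset.Icc 1 ℓ, ∀ j ∈ Finset.Icc 1 ℓ, i ≤ j → T j ⊆ T i)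
    (s : V) (hs : s ∈ T ℓ)
    (OPT : ℝ)
    (hOPT : IsLeast (MLSTCosts G (Sym2.lift ⟨c, hcsymm⟩) ℓ (fun i => (↑(T i) : Set V))) OPT) :
    IsLeast
      {v : ℝ | ∃ (x y : V → V → ℕ) (f : V → V → ℝ),
        ILPFeasible G ℓ T s x y f ∧ v = ILPobj c y} OPT := by
  obtain ⟨hmem, hlow⟩ := hOPT
  refine ⟨?_, ?_⟩
  · obtain ⟨x, y, f, hf, hle⟩ :=
      mlst_to_ilp G c hcsymm hcpos ℓ hℓ T hnest s hs OPT hmem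
    obtain ⟨r, hr, hr'⟩ := ilp_to_mlst G c hcsymm hcpos ℓ T hnest s x y f hf
    exact ⟨x, y, f, hf, le_antisymm ((hlow hr).trans hr') hle⟩
  · rintro v ⟨x, y, f, hf, rfl⟩
    obtain ⟨r, hr, hr'⟩ := ilp_to_mlst G c hcsymm hcpos ℓ T hnest s x y f hf
    exact (hlow hr).trans hr'
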